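/- Let U ⊂ ℝ² be open and connected, and let u ∈ C¹(U) with u ≥ 0 in U satisfy Δ_A u ≤ 0 in U in the weak sense (∫_U (a(|∇u|)/|∇u|)∇u·∇ζ dx ≥ 0 for all nonnegative ζ ∈ C_c^∞(U)), where a satisfies a(0)=0 and a₀ ≤ ta'(t)/a(t) ≤ a₁ for t>0. Then either u ≡ 0 in U or u > 0 everywhere in U. -/

import Mathlib

open RealInnerProductSpace

/-!
If `u` is positive at `y`, it dominates a positive barrier on an annulus around `y`, so positivity
spreads from `y` to every ball `B(y, R)` whose closure lies in `U`; connectedness does the rest.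

The barrier is the radial `A`-harmonic function `v(x) = V(r)`, `r = |x - y|`, determined by
`a(-dV/dr) = c r^(1 - n)` in dimension `n`; its flux `-c r^(-n) (x - y)` is divergence free away
from `y`. It vanishes for `r = R` and, since `a` is invertible near `0`, its slope can be kept so
small that `v ≤ u` for `r = ρ`.

The comparison `v ≤ u` on the annulus comes from testing with a smooth nondecreasing function of
`v - u - ε` supported in `{v - u ≥ ε}`: the flux is strictly monotone, so the test function has
zero gradient, hence vanishes.
-/

open MeasureTheory Metric Set Filter Topology Gradient Convolution Module

section TestFunctions

lemma contDiff_of_forall_mem_tsupport {𝕜 E F : Type*} [NontriviallyNormedField 𝕜]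
    [NormedAddCommGroup E] [NormedSpace 𝕜 E] [NormedAddCommGroup F] [NormedSpace 𝕜 F]
    {n : WithTop ℕ∞} {f : E → F} (hf : ∀ x ∈ tsupport f, ContDiffAt 𝕜 n f x) :
    ContDiff 𝕜 n f := by
  refine contDiff_iff_contDiffAt.2 fun x ↦ ?_
  by_cases hx : x ∈ tsupport f
  · exact hf x hx
  · exact contDiffAt_const.congr_of_eventuallyEq (notMem_tsupport_iff_eventuallyEq.1 hx)

variable {E : Type*} [NormedAddCommGroup E] [NormedSpace ℝ E] [FiniteDimensional ℝ E]

lemma exists_contDiff_fderiv_sub_le {ζ : E → ℝ} (hζ : ContDiff ℝ 1 ζ)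
    (hc : HasCompactSupport ζ) (hζ₀ : ∀ x, 0 ≤ ζ x) {δ ε : ℝ} (hδ : 0 < δ) (hε : 0 < ε) :
    ∃ η : E → ℝ, ContDiff ℝ (⊤ : ℕ∞) η ∧ tsupport η ⊆ cthickening δ (tsupport ζ) ∧
      (∀ x, 0 ≤ η x) ∧ ∀ x, ‖fderiv ℝ η x - fderiv ℝ ζ x‖ ≤ ε := by
  borelize E
  let μ : Measure E := Measure.addHaar
  have hζ' : Continuous (fderiv ℝ ζ) := hζ.continuous_fderiv one_ne_zero
  obtain ⟨r, hr, hr'⟩ := Metric.uniformContinuous_iff.1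
    ((hc.fderiv ℝ).uniformContinuous_of_continuous hζ') ε hε
  have hρ : 0 < min r δ := lt_min hr hδ
  let φ : ContDiffBump (0 : E) := ⟨min r δ / 2, min r δ, half_pos hρ, half_lt_self hρ⟩
  refine ⟨φ.normed μ ⋆[ContinuousLinearMap.lsmul ℝ ℝ, μ] ζ, ?_, ?_, fun x ↦ ?_, fun x ↦ ?_⟩
  · exact φ.hasCompactSupport_normed.contDiff_convolution_left _ φ.contDiff_normed
      hζ.continuous.locallyIntegrable
  · refine closure_minimal ((support_convolution_subset _).trans ?_) isClosed_cthickening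
    rintro _ ⟨y, hy, z, hz, rfl⟩
    rw [φ.support_normed_eq, mem_ball_zero_iff] at hy
    refine mem_cthickening_of_dist_le _ z _ _ (subset_tsupport _ hz) ?_
    simpa [dist_eq_norm] using hy.le.trans (min_le_right _ _)
  · exact integral_nonneg fun t ↦ mul_nonneg (φ.nonneg_normed t) (hζ₀ _)
  · rw [(hc.hasFDerivAt_convolution_right (ContinuousLinearMap.lsmul ℝ ℝ)
      (φ.continuous_normed (μ := μ)).locallyIntegrable hζ x).fderiv, ← dist_eq_norm]
    exact φ.dist_normed_convolution_le hζ'.aestronglyMeasurable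
      fun z hz ↦ (hr' (lt_of_lt_of_le hz (min_le_left _ _))).le

end TestFunctions

section Gradient

variable {E : Type*} [NormedAddCommGroup E] [InnerProductSpace ℝ E] [CompleteSpace E]
  {X : E → E} {U : Set E} {ζ : E → ℝ}

lemma gradient_of_notMem_tsupport {x : E} (hx : x ∉ tsupport ζ) : ∇ ζ x = 0 := by
  rw [gradient, fderiv_of_notMem_tsupport ℝ hx, map_zero]

lemma continuousOn_gradient {u : E → ℝ} (hU : IsOpen U) (hu : ContDiffOn ℝ 1 u U) :
    ContinuousOn (∇ u) U :=
  (InnerProductSpace.toDual ℝ E).symm.continuous.comp_continuousOn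
    (hu.continuousOn_fderiv_of_isOpen hU le_rfl)

lemma tsupport_inner_gradient_subset : tsupport (fun x ↦ ⟪X x, ∇ ζ x⟫) ⊆ tsupport ζ := by
  refine closure_minimal (fun x hx ↦ ?_) (isClosed_tsupport ζ)
  contrapose! hx
  rw [Function.notMem_support, gradient_of_notMem_tsupport hx, inner_zero_right]

lemma continuous_inner_gradient (hU : IsOpen U) (hX : ContinuousOn X U) (hζ : ContDiff ℝ 1 ζ)
    (hs : tsupport ζ ⊆ U) : Continuous fun x ↦ ⟪X x, ∇ ζ x⟫ := by
  have hgrad_ζ : ContinuousOn (∇ ζ) U := continuousOn_gradient hU hζ.contDiffOn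
  exact continuous_of_tsupport fun x hx ↦
    (hX.inner hgrad_ζ).continuousAt (hU.mem_nhds (hs (tsupport_inner_gradient_subset hx)))

lemma hasCompactSupport_inner_gradient (hc : HasCompactSupport ζ) :
    HasCompactSupport fun x ↦ ⟪X x, ∇ ζ x⟫ :=
  hc.of_isClosed_subset (isClosed_tsupport _) tsupport_inner_gradient_subset

lemma eq_zero_of_compactSupport_of_gradient_eq_zero [Nontrivial E] (hζ : Differentiable ℝ ζ)
    (hc : HasCompactSupport ζ) (h : ∀ x, ∇ ζ x = 0) (x : E) : ζ x = 0 := by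
  have : NoncompactSpace E := NormedSpace.noncompactSpace ℝ E
  obtain ⟨z, hz⟩ : ∃ z, z ∉ tsupport ζ := by
    by_contra! hall
    exact noncompact_univ E (eq_univ_of_forall hall ▸ hc)
  rw [is_const_of_fderiv_eq_zero hζ (fun x ↦ by simpa [gradient] using h x) x z]
  exact image_eq_zero_of_notMem_tsupport hz

end Gradient

section WeakDivergence

variable {E : Type*} [NormedAddCommGroup E] [InnerProductSpace ℝ E] [FiniteDimensional ℝ E]
  [MeasurableSpace E] [BorelSpace E] {X Y : E → E} {U V : Set E} {ζ : E → ℝ}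

lemma integrable_inner_gradient (hU : IsOpen U) (hX : ContinuousOn X U) (hζ : ContDiff ℝ 1 ζ)
    (hc : HasCompactSupport ζ) (hs : tsupport ζ ⊆ U) : Integrable fun x ↦ ⟪X x, ∇ ζ x⟫ :=
  (continuous_inner_gradient hU hX hζ hs).integrable_of_hasCompactSupport
    (hasCompactSupport_inner_gradient hc)

lemma setIntegral_inner_gradient (hs : tsupport ζ ⊆ U) :
    ∫ x in U, ⟪X x, ∇ ζ x⟫ = ∫ x, ⟪X x, ∇ ζ x⟫ :=
  setIntegral_eq_integral_of_forall_compl_eq_zero fun x hx ↦ by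
    rw [gradient_of_notMem_tsupport fun h ↦ hx (hs h), inner_zero_right]

/-- The inequality `div X ≤ 0` on `U` in the sense of distributions, tested against nonnegative
smooth functions with compact support in `U`. -/
def WeakDivNonpos (X : E → E) (U : Set E) : Prop :=
  ∀ ζ : E → ℝ, ContDiff ℝ (⊤ : ℕ∞) ζ → HasCompactSupport ζ → tsupport ζ ⊆ U → (∀ x, 0 ≤ ζ x) →
    0 ≤ ∫ x in U, ⟪X x, ∇ ζ x⟫

namespace WeakDivNonpos

lemma mono (hX : WeakDivNonpos X V) (hUV : U ⊆ V) : WeakDivNonpos X U := by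
  intro ζ hζ hc hs hζ₀
  rw [setIntegral_inner_gradient hs, ← setIntegral_inner_gradient (hs.trans hUV)]
  exact hX ζ hζ hc (hs.trans hUV) hζ₀

lemma add (hX : WeakDivNonpos X U) (hY : WeakDivNonpos Y U) (hU : IsOpen U)
    (hXc : ContinuousOn X U) (hYc : ContinuousOn Y U) :
    WeakDivNonpos (fun x ↦ X x + Y x) U := by
  intro ζ hζ hc hs hζ₀
  have hζ₁ : ContDiff ℝ 1 ζ := hζ.of_le (mod_cast le_top)
  simp only [inner_add_left]
  rw [integral_add (integrable_inner_gradient hU hXc hζ₁ hc hs).integrableOn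
    (integrable_inner_gradient hU hYc hζ₁ hc hs).integrableOn]
  exact add_nonneg (hX ζ hζ hc hs hζ₀) (hY ζ hζ hc hs hζ₀)

lemma congr (hX : WeakDivNonpos X U) (hU : IsOpen U) (hXY : EqOn X Y U) :
    WeakDivNonpos Y U := by
  intro ζ hζ hc hs hζ₀
  exact (hX ζ hζ hc hs hζ₀).trans_eq <|
    setIntegral_congr_fun hU.measurableSet fun x hx ↦ by simp only [hXY hx]

theorem integral_nonneg_of_contDiff_one (hX : WeakDivNonpos X U) (hU : IsOpen U)
    (hXc : ContinuousOn X U) (hζ : ContDiff ℝ 1 ζ) (hc : HasCompactSupport ζ) (hs : tsupport ζ ⊆ U)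
    (hζ₀ : ∀ x, 0 ≤ ζ x) : 0 ≤ ∫ x, ⟪X x, ∇ ζ x⟫ := by
  obtain ⟨δ, hδ, hδU⟩ := hc.isCompact.exists_cthickening_subset_open hU hs
  set K := cthickening δ (tsupport ζ)
  have hK : IsCompact K := hc.isCompact.cthickening
  have hXK : IntegrableOn (fun x ↦ ‖X x‖) K := ((hXc.mono hδU).integrableOn_compact hK).norm
  set C := ∫ x in K, ‖X x‖
  have hC : 0 < C + 1 := add_pos_of_nonneg_of_pos (integral_nonneg fun x ↦ norm_nonneg _) one_pos
  refine le_of_forall_pos_le_add fun ε hε ↦ ?_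
  obtain ⟨η, hη, hηK, hη₀, hηζ⟩ :=
    exists_contDiff_fderiv_sub_le hζ hc hζ₀ hδ (div_pos hε hC)
  have hηc : HasCompactSupport η := hK.of_isClosed_subset (isClosed_tsupport η) hηK
  have hη_nonneg : 0 ≤ ∫ x, ⟪X x, ∇ η x⟫ := by
    rw [← setIntegral_inner_gradient (hηK.trans hδU)]
    exact hX η hη hηc (hηK.trans hδU) hη₀
  have hpointwise : ∀ x,
      ⟪X x, ∇ η x⟫ ≤ ⟪X x, ∇ ζ x⟫ + K.indicator (fun x ↦ ε / (C + 1) * ‖X x‖) x := by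
    intro x
    by_cases hx : x ∈ K
    · have := (fderiv ℝ η x - fderiv ℝ ζ x).le_of_opNorm_le (hηζ x) (X x)
      rw [indicator_of_mem hx, ← sub_le_iff_le_add']
      simpa using (le_abs_self _).trans this
    · rw [indicator_of_notMem hx, gradient_of_notMem_tsupport fun h ↦ hx (hηK h),
        gradient_of_notMem_tsupport fun h ↦ hx (self_subset_cthickening _ h), add_zero]
  have hζi : Integrable fun x ↦ ⟪X x, ∇ ζ x⟫ := integrable_inner_gradient hU hXc hζ hc hs
  have hKi := (integrable_indicator_iff hK.measurableSet).2 (hXK.const_mul (ε / (C + 1)))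
  calc 0 ≤ ∫ x, ⟪X x, ∇ η x⟫ := hη_nonneg
    _ ≤ ∫ x, (⟪X x, ∇ ζ x⟫ + K.indicator (fun x ↦ ε / (C + 1) * ‖X x‖) x) :=
      integral_mono (integrable_inner_gradient hU hXc (hη.of_le (mod_cast le_top)) hηc
        (hηK.trans hδU)) (hζi.add hKi) hpointwise
    _ = (∫ x, ⟪X x, ∇ ζ x⟫) + ε / (C + 1) * C := by
      rw [integral_add hζi hKi, integral_indicator hK.measurableSet, integral_const_mul]
    _ ≤ (∫ x, ⟪X x, ∇ ζ x⟫) + ε := by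
      gcongr
      rw [div_mul_eq_mul_div, div_le_iff₀ hC]
      exact mul_le_mul_of_nonneg_left (lt_add_one C).le hε.le

end WeakDivNonpos

end WeakDivergence

section Comparison

/-- A `C¹` substitute for the positive part of `w` on `Ω`, extended by zero: a smooth nondecreasing
function of `w`, positive exactly where `w` is. -/
noncomputable def smoothPosPartOn {E : Type*} (Ω : Set E) (w : E → ℝ) : E → ℝ :=
  Ω.indicator (expNegInvGlue ∘ w)

lemma tsupport_smoothPosPartOn_subset {E : Type*} [TopologicalSpace E] {Ω : Set E}
    {w : E → ℝ} (hΩ : IsOpen Ω) (hw : ContinuousOn w (closure Ω))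
    (hfr : ∀ x ∈ frontier Ω, w x < 0) : tsupport (smoothPosPartOn Ω w) ⊆ Ω := by
  have hclosed : IsClosed (closure Ω ∩ w ⁻¹' Ici 0) :=
    hw.preimage_isClosed_of_isClosed isClosed_closure isClosed_Ici
  have hsub : tsupport (smoothPosPartOn Ω w) ⊆ closure Ω ∩ w ⁻¹' Ici 0 := by
    refine closure_minimal (fun x hx ↦ ?_) hclosed
    obtain ⟨hxΩ, hwx⟩ : x ∈ Ω ∧ 0 < w x := by simpa [smoothPosPartOn] using hx
    exact ⟨subset_closure hxΩ, hwx.le⟩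
  intro x hx
  by_contra hxΩ
  exact (hfr x (hΩ.frontier_eq ▸ ⟨(hsub hx).1, hxΩ⟩)).not_ge (hsub hx).2

lemma smoothPosPartOn_eventuallyEq {E : Type*} [TopologicalSpace E] {Ω : Set E} (hΩ : IsOpen Ω)
    (w : E → ℝ) {x : E} (hx : x ∈ Ω) : smoothPosPartOn Ω w =ᶠ[𝓝 x] expNegInvGlue ∘ w :=
  eqOn_indicator.eventuallyEq_of_mem (hΩ.mem_nhds hx)

lemma contDiff_smoothPosPartOn {E : Type*} [NormedAddCommGroup E] [NormedSpace ℝ E] {Ω : Set E}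
    {w : E → ℝ} (hΩ : IsOpen Ω) (hw : ContDiffOn ℝ 1 w Ω)
    (hs : tsupport (smoothPosPartOn Ω w) ⊆ Ω) : ContDiff ℝ 1 (smoothPosPartOn Ω w) :=
  contDiff_of_forall_mem_tsupport fun _ hx ↦
    ((expNegInvGlue.contDiff.comp_contDiffOn hw).contDiffAt
      (hΩ.mem_nhds (hs hx))).congr_of_eventuallyEq (smoothPosPartOn_eventuallyEq hΩ w (hs hx))

lemma gradient_smoothPosPartOn {E : Type*} [NormedAddCommGroup E] [InnerProductSpace ℝ E]
    [CompleteSpace E] {Ω : Set E} {w : E → ℝ} (hΩ : IsOpen Ω) {x : E} (hx : x ∈ Ω)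
    (hw : DifferentiableAt ℝ w x) :
    ∇ (smoothPosPartOn Ω w) x = deriv expNegInvGlue (w x) • ∇ w x := by
  have hglue : HasDerivAt expNegInvGlue (deriv expNegInvGlue (w x)) (w x) :=
    (expNegInvGlue.contDiff.differentiable (n := 1) one_ne_zero _).hasDerivAt
  rw [gradient, ((hglue.comp_hasFDerivAt x hw.hasFDerivAt).congr_of_eventuallyEq
    (smoothPosPartOn_eventuallyEq hΩ w hx)).fderiv, map_smul, gradient]

variable {E : Type*} [NormedAddCommGroup E] [InnerProductSpace ℝ E] [FiniteDimensional ℝ E]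
  [MeasurableSpace E] [BorelSpace E] {F : E → E} {Ω : Set E}

lemma gradient_eq_zero_of_integral_nonneg (hF : Continuous F)
    (hFmono : ∀ p q, p ≠ q → 0 < ⟪F p - F q, p - q⟫) (hΩ : IsOpen Ω) {p q : E → E}
    (hp : ContinuousOn p Ω) (hq : ContinuousOn q Ω) {ζ c : E → ℝ} (hζ : ContDiff ℝ 1 ζ)
    (hcs : HasCompactSupport ζ) (hs : tsupport ζ ⊆ Ω) (hc : ∀ x, 0 ≤ c x)
    (hgrad_ζ : ∀ x ∈ Ω, ∇ ζ x = c x • (p x - q x))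
    (hint : 0 ≤ ∫ x, ⟪F (q x) - F (p x), ∇ ζ x⟫) (x : E) : ∇ ζ x = 0 := by
  by_cases hxΩ : x ∈ Ω
  swap
  · exact gradient_of_notMem_tsupport fun h ↦ hxΩ (hs h)
  have hX : ContinuousOn (fun x ↦ F (p x) - F (q x)) Ω :=
    (hF.comp_continuousOn hp).sub (hF.comp_continuousOn hq)
  have hinner : ∀ x ∈ Ω, ⟪F (p x) - F (q x), ∇ ζ x⟫ = c x * ⟪F (p x) - F (q x), p x - q x⟫ :=
    fun x hx ↦ by rw [hgrad_ζ x hx, real_inner_smul_right]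
  have hnonneg : ∀ x, 0 ≤ ⟪F (p x) - F (q x), ∇ ζ x⟫ := by
    intro x
    by_cases hx : x ∈ Ω
    · rw [hinner x hx]
      refine mul_nonneg (hc x) ?_
      obtain h | h := eq_or_ne (p x) (q x)
      · simp [h]
      · exact (hFmono _ _ h).le
    · rw [gradient_of_notMem_tsupport fun h ↦ hx (hs h), inner_zero_right]
  have hzero : ⟪F (p x) - F (q x), ∇ ζ x⟫ = 0 := by
    by_contra hne
    have hcont := continuous_inner_gradient hΩ hX hζ hs
    have hpos := hcont.integral_pos_of_hasCompactSupport_nonneg_nonzero (μ := volume)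
      (hasCompactSupport_inner_gradient hcs) hnonneg hne
    simp only [← neg_sub (F (p _)), inner_neg_left, integral_neg] at hint
    linarith
  rw [hinner x hxΩ] at hzero
  obtain h | h := eq_or_ne (p x) (q x)
  · simp [hgrad_ζ x hxΩ, h]
  · simp [hgrad_ζ x hxΩ, (mul_eq_zero.1 hzero).resolve_right (hFmono _ _ h).ne']

theorem le_of_weakDivNonpos_of_le_on_frontier [Nontrivial E] (hF : Continuous F)
    (hFmono : ∀ p q, p ≠ q → 0 < ⟪F p - F q, p - q⟫) (hΩ : IsOpen Ω)
    (hΩb : Bornology.IsBounded Ω) {u v : E → ℝ} (hu : ContDiffOn ℝ 1 u Ω)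
    (hv : ContDiffOn ℝ 1 v Ω) (huc : ContinuousOn u (closure Ω))
    (hvc : ContinuousOn v (closure Ω)) (husuper : WeakDivNonpos (fun x ↦ F (∇ u x)) Ω)
    (hvsub : WeakDivNonpos (fun x ↦ -F (∇ v x)) Ω) (hfr : ∀ x ∈ frontier Ω, v x ≤ u x)
    {x : E} (hx : x ∈ Ω) : v x ≤ u x := by
  refine le_of_forall_pos_le_add fun ε hε ↦ ?_
  set w : E → ℝ := fun x ↦ v x - u x - ε
  set ζ : E → ℝ := smoothPosPartOn Ω w with hζ_def
  have hs : tsupport ζ ⊆ Ω := tsupport_smoothPosPartOn_subset hΩ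
    ((hvc.sub huc).sub continuousOn_const) fun x hx ↦ by linarith [hfr x hx]
  have hcs : HasCompactSupport ζ :=
    hΩb.isCompact_closure.of_isClosed_subset (isClosed_tsupport ζ) (hs.trans subset_closure)
  have hw : ContDiffOn ℝ 1 w Ω := (hv.sub hu).sub contDiffOn_const
  have hζ : ContDiff ℝ 1 ζ := contDiff_smoothPosPartOn hΩ hw hs
  have hgrad_ζ : ∀ x ∈ Ω, ∇ ζ x = deriv expNegInvGlue (w x) • (∇ v x - ∇ u x) := by
    intro x hx
    have hdiff : ∀ {f : E → ℝ}, ContDiffOn ℝ 1 f Ω → DifferentiableAt ℝ f x := fun hf ↦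
      (hf.differentiableOn one_ne_zero).differentiableAt (hΩ.mem_nhds hx)
    rw [gradient_smoothPosPartOn hΩ hx (hdiff hw)]
    simp only [w, gradient, fderiv_sub_const, fderiv_fun_sub (hdiff hv) (hdiff hu), map_sub]
  have hgrad_u : ContinuousOn (∇ u) Ω := continuousOn_gradient hΩ hu
  have hgrad_v : ContinuousOn (∇ v) Ω := continuousOn_gradient hΩ hv
  have hint : 0 ≤ ∫ x, ⟪F (∇ u x) - F (∇ v x), ∇ ζ x⟫ := by
    have huF := hF.comp_continuousOn hgrad_u
    have hvF := (hF.comp_continuousOn hgrad_v).neg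
    simpa only [sub_eq_add_neg] using (husuper.add hvsub hΩ huF hvF).integral_nonneg_of_contDiff_one
      hΩ (huF.add hvF) hζ hcs hs (indicator_nonneg fun x _ ↦ expNegInvGlue.nonneg _)
  have hζ_zero : ζ x = 0 := eq_zero_of_compactSupport_of_gradient_eq_zero
    (hζ.differentiable one_ne_zero) hcs
    (gradient_eq_zero_of_integral_nonneg hF hFmono hΩ hgrad_v hgrad_u hζ hcs hs
      (fun x ↦ expNegInvGlue.monotone.deriv_nonneg) hgrad_ζ hint) x
  rw [hζ_def, smoothPosPartOn, indicator_of_mem hx, Function.comp_apply,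
    expNegInvGlue.zero_iff_nonpos] at hζ_zero
  linarith

end Comparison

section RadialFields

lemma integral_fderiv_apply_sub {E : Type*} [NormedAddCommGroup E] [NormedSpace ℝ E]
    [FiniteDimensional ℝ E] [MeasurableSpace E] [BorelSpace E] (μ : Measure E)
    [μ.IsAddHaarMeasure] {θ : E → ℝ} (hθ : ContDiff ℝ 1 θ) (hc : HasCompactSupport θ) (y : E) :
    ∫ x, fderiv ℝ θ x (x - y) ∂μ = -(finrank ℝ E * ∫ x, θ x ∂μ) := by
  let b := finBasis ℝ E
  let coord (i : Fin (finrank ℝ E)) : E →L[ℝ] ℝ := (b.coord i).toContinuousLinearMap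
  have hθ' : Continuous (fderiv ℝ θ) := hθ.continuous_fderiv one_ne_zero
  have hint : ∀ i, Integrable (fun x ↦ coord i (x - y) * fderiv ℝ θ x (b i)) μ := fun i ↦
    (((coord i).continuous.comp (continuous_sub_right y)).mul
      (hθ'.clm_apply continuous_const)).integrable_of_hasCompactSupport
      (hc.fderiv_apply ℝ (b i)).mul_left
  have hparts : ∀ i, ∫ x, coord i (x - y) * fderiv ℝ θ x (b i) ∂μ = -∫ x, θ x ∂μ := by
    intro i
    have hderiv : ∀ x, HasFDerivAt (fun x ↦ coord i (x - y)) (coord i) x := fun x ↦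
      (coord i).hasFDerivAt.comp x ((hasFDerivAt_id x).sub_const y)
    have hone : ∀ x, fderiv ℝ (fun x ↦ coord i (x - y)) x (b i) * θ x = θ x := fun x ↦ by
      rw [(hderiv x).fderiv]
      simp [coord]
    have hθi : Integrable θ μ := hθ.continuous.integrable_of_hasCompactSupport hc
    simpa only [hone] using integral_mul_fderiv_eq_neg_fderiv_mul_of_integrable
      (by simpa only [hone] using hθi) (hint i)
      (Continuous.integrable_of_hasCompactSupport (by fun_prop) hc.mul_left)
      (fun x _ ↦ (hderiv x).differentiableAt) (fun x _ ↦ hθ.differentiable one_ne_zero x)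
  have hexpand : ∀ x, fderiv ℝ θ x (x - y) = ∑ i, coord i (x - y) * fderiv ℝ θ x (b i) := by
    intro x
    conv_lhs => rw [← b.sum_repr (x - y), map_sum]
    simp [coord]
  simp only [hexpand]
  rw [integral_finsetSum _ fun i _ ↦ hint i]
  simp only [hparts, Finset.sum_const, Finset.card_univ, Fintype.card_fin, nsmul_eq_mul, mul_neg]

variable {E : Type*} [NormedAddCommGroup E] [InnerProductSpace ℝ E]

lemma hasGradientAt_comp_norm_sub [CompleteSpace E] {f : ℝ → ℝ} {f' : ℝ} {x y : E} (hxy : x ≠ y)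
    (hf : HasDerivAt f f' ‖x - y‖) :
    HasGradientAt (fun z ↦ f ‖z - y‖) (f' • ‖x - y‖⁻¹ • (x - y)) x := by
  have hpos : ‖x - y‖ ≠ 0 := norm_ne_zero_iff.2 (sub_ne_zero.2 hxy)
  have hsq : HasFDerivAt (fun z ↦ ‖z - y‖ ^ 2) (2 • innerSL ℝ (x - y)) x := by
    simpa using ((hasFDerivAt_id x).sub_const y).norm_sq
  have hnorm : HasFDerivAt (fun z ↦ ‖z - y‖) (‖x - y‖⁻¹ • innerSL ℝ (x - y)) x := by
    have := hsq.sqrt (pow_ne_zero 2 hpos)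
    simp only [Real.sqrt_sq (norm_nonneg _)] at this
    refine this.congr_fderiv ?_
    ext z
    simp only [one_div, mul_inv_rev, smul_apply, coe_innerSL_apply, nsmul_eq_mul, Nat.cast_ofNat,
      smul_eq_mul]
    field_simp
  rw [hasGradientAt_iff_hasFDerivAt]
  refine (hf.comp_hasFDerivAt x hnorm).congr_fderiv ?_
  ext z
  simp

lemma fderiv_norm_zpow_mul_apply_sub [CompleteSpace E] (k : ℤ) {ζ : E → ℝ} {x y : E}
    (hxy : x ≠ y) (hζ : DifferentiableAt ℝ ζ x) :
    fderiv ℝ (fun z ↦ ‖z - y‖ ^ k * ζ z) x (x - y) =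
      ‖x - y‖ ^ k * (fderiv ℝ ζ x (x - y) + k * ζ x) := by
  have hne : ‖x - y‖ ≠ 0 := norm_ne_zero_iff.2 (sub_ne_zero.2 hxy)
  have hzpow := (hasGradientAt_comp_norm_sub hxy
    (hasDerivAt_zpow k ‖x - y‖ (Or.inl hne))).hasFDerivAt
  rw [(hzpow.fun_mul hζ.hasFDerivAt).fderiv]
  simp only [add_apply, smul_apply, smul_eq_mul, map_smul, InnerProductSpace.toDual_apply_apply,
    real_inner_self_eq_norm_sq, zpow_sub_one₀ hne]
  field_simp

lemma contDiffOn_comp_norm_sub {f : ℝ → ℝ} (hf : ContDiffOn ℝ 1 f (Ioi 0)) (y : E) :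
    ContDiffOn ℝ 1 (fun x ↦ f ‖x - y‖) {y}ᶜ := by
  have hpos : ∀ x ∈ ({y}ᶜ : Set E), x - y ≠ 0 := fun x hx ↦ sub_ne_zero.2 hx
  exact hf.comp ((contDiffOn_id.sub contDiffOn_const).norm ℝ hpos)
    fun x hx ↦ norm_pos_iff.2 (hpos x hx)

variable [FiniteDimensional ℝ E] [MeasurableSpace E] [BorelSpace E]

theorem integral_inner_norm_zpow_smul_gradient {ζ : E → ℝ} (hζ : ContDiff ℝ 1 ζ)
    (hc : HasCompactSupport ζ) {y : E} (hs : tsupport ζ ⊆ {y}ᶜ) :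
    ∫ x, ⟪‖x - y‖ ^ (-(finrank ℝ E : ℤ)) • (x - y), ∇ ζ x⟫ = 0 := by
  -- `θ` absorbs the weight: the Euler field `x - y` has constant divergence `n = -k`, which cancels
  -- the term produced by the homogeneity of `‖x - y‖ ^ k`.
  set k : ℤ := -(finrank ℝ E : ℤ) with hk
  set θ : E → ℝ := fun x ↦ ‖x - y‖ ^ k * ζ x
  have hθs : tsupport θ ⊆ tsupport ζ := closure_mono fun x hx ↦ right_ne_zero_of_mul hx
  have hθc : HasCompactSupport θ := hc.mul_left
  have hzpow : ContDiffOn ℝ 1 (fun r : ℝ ↦ r ^ k) (Ioi 0) := fun r hr ↦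
    (analyticAt_id.fun_zpow (ne_of_gt hr)).contDiffAt.contDiffWithinAt
  have hθ : ContDiff ℝ 1 θ := contDiff_of_forall_mem_tsupport fun x hx ↦
    ((contDiffOn_comp_norm_sub hzpow y).contDiffAt
      (isOpen_compl_singleton.mem_nhds (hs (hθs hx)))).mul hζ.contDiffAt
  have hpointwise : ∀ x, ⟪‖x - y‖ ^ k • (x - y), ∇ ζ x⟫ = fderiv ℝ θ x (x - y) - k * θ x := by
    intro x
    by_cases hx : x ∈ tsupport ζ
    · rw [fderiv_norm_zpow_mul_apply_sub k (hs hx) (hζ.differentiable one_ne_zero x),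
        real_inner_smul_left, inner_gradient_right, conj_trivial]
      simp only [θ]
      ring
    · rw [gradient_of_notMem_tsupport hx, fderiv_of_notMem_tsupport ℝ fun h ↦ hx (hθs h)]
      simp [θ, image_eq_zero_of_notMem_tsupport hx]
  have hθi : Integrable θ := hθ.continuous.integrable_of_hasCompactSupport hθc
  have hθ'i : Integrable fun x ↦ fderiv ℝ θ x (x - y) := by
    simpa using integrable_inner_gradient (X := (· - y)) isOpen_univ (by fun_prop) hθ hθc
      (subset_univ _)
  simp only [hpointwise]
  rw [integral_sub hθ'i (hθi.const_mul _), integral_fderiv_apply_sub volume hθ hθc,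
    integral_const_mul]
  simp [hk]

lemma weakDivNonpos_const_smul_norm_zpow_smul (c : ℝ) {y : E} {U : Set E} (hU : U ⊆ {y}ᶜ) :
    WeakDivNonpos (fun x ↦ c • ‖x - y‖ ^ (-(finrank ℝ E : ℤ)) • (x - y)) U := by
  intro ζ hζ hc hs _
  rw [setIntegral_inner_gradient hs]
  simp only [real_inner_smul_left _ _ c, integral_const_mul]
  rw [integral_inner_norm_zpow_smul_gradient (hζ.of_le (mod_cast le_top)) hc (hs.trans hU),
    mul_zero]

end RadialFields

section Flux

lemma strictMonoOn_Ici_of_mul_deriv_div_pos {a a' : ℝ → ℝ} (hac : ContinuousOn a (Ici 0))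
    (hderiv : ∀ t, 0 < t → HasDerivAt a (a' t) t) (hnonneg : ∀ t, 0 < t → 0 ≤ a t)
    (hpos : ∀ t, 0 < t → 0 < t * a' t / a t) : StrictMonoOn a (Ici 0) := by
  refine strictMonoOn_of_deriv_pos (convex_Ici 0) hac fun t ht ↦ ?_
  rw [interior_Ici] at ht
  rw [(hderiv t ht).deriv]
  have hmul : 0 < t * a' t := by
    obtain ⟨h, -⟩ | ⟨-, h⟩ := div_pos_iff.1 (hpos t ht)
    · exact h
    · exact absurd (hnonneg t ht) h.not_ge
  exact pos_of_mul_pos_right hmul (le_of_lt ht)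

variable {E : Type*} [NormedAddCommGroup E] [InnerProductSpace ℝ E] {a : ℝ → ℝ}

/-- The flux `(a(|p|)/|p|) p` of the `A`-Laplacian `Δ_A u = div (flux a (∇ u))`; at `p = 0` the
convention `x / 0 = 0` gives the value `0`. -/
noncomputable def flux (a : ℝ → ℝ) (p : E) : E := (a ‖p‖ / ‖p‖) • p

lemma flux_smul_of_norm_eq_one (ha₀ : a 0 = 0) {t : ℝ} (ht : 0 ≤ t) {e : E} (he : ‖e‖ = 1) :
    flux a (t • e) = a t • e := by
  obtain rfl | ht' := ht.eq_or_lt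
  · simp [flux, ha₀]
  · rw [flux, norm_smul, he, mul_one, Real.norm_of_nonneg ht, smul_smul, div_mul_cancel₀ _ ht'.ne']

lemma norm_flux (ha₀ : a 0 = 0) (p : E) : ‖flux a p‖ = |a ‖p‖| := by
  obtain rfl | hp := eq_or_ne p 0
  · simp [flux, ha₀]
  · rw [flux, norm_smul, Real.norm_eq_abs, abs_div, abs_norm,
      div_mul_cancel₀ _ (norm_ne_zero_iff.2 hp)]

lemma continuous_flux (hac : ContinuousOn a (Ici 0)) (ha₀ : a 0 = 0) :
    Continuous (flux a : E → E) := by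
  have hnorm : Continuous fun p : E ↦ a ‖p‖ := hac.comp_continuous continuous_norm norm_nonneg
  refine continuous_iff_continuousAt.2 fun p ↦ ?_
  obtain rfl | hp := eq_or_ne p 0
  · have hzero : flux a (0 : E) = 0 := smul_zero _
    rw [ContinuousAt, hzero, tendsto_zero_iff_norm_tendsto_zero]
    simpa [norm_flux ha₀, ha₀] using hnorm.abs.tendsto 0
  · exact (hnorm.continuousAt.div continuous_norm.continuousAt (norm_ne_zero_iff.2 hp)).smul
      continuousAt_id

lemma inner_flux_sub_flux (ha₀ : a 0 = 0) (p q : E) :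
    ⟪flux a p - flux a q, p - q⟫ = (a ‖p‖ - a ‖q‖) * (‖p‖ - ‖q‖) +
      (a ‖p‖ / ‖p‖ + a ‖q‖ / ‖q‖) * (‖p‖ * ‖q‖ - ⟪p, q⟫) := by
  have hcancel : ∀ z : E, a ‖z‖ / ‖z‖ * ‖z‖ = a ‖z‖ := fun z ↦
    div_mul_cancel_of_imp fun h ↦ by rw [h, ha₀]
  simp only [flux, inner_sub_left, inner_sub_right, real_inner_smul_left,
    real_inner_self_eq_norm_sq, real_inner_comm p q]
  linear_combination (‖p‖ - ‖q‖) * (hcancel p - hcancel q)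

lemma inner_flux_sub_flux_pos (hmono : StrictMonoOn a (Ici 0)) (ha₀ : a 0 = 0) {p q : E}
    (hpq : p ≠ q) : 0 < ⟪flux a p - flux a q, p - q⟫ := by
  have hpos : ∀ t, 0 < t → 0 < a t := fun t ht ↦ ha₀ ▸ hmono self_mem_Ici (le_of_lt ht) ht
  rw [inner_flux_sub_flux ha₀]
  obtain hnorm | hnorm := eq_or_ne ‖p‖ ‖q‖
  · have hp : 0 < ‖p‖ := (norm_nonneg p).lt_of_ne fun h ↦
      hpq ((norm_eq_zero.1 h.symm).trans (norm_eq_zero.1 (h.trans hnorm).symm).symm)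
    have hinner : ⟪p, q⟫ < ‖p‖ * ‖q‖ := by
      rw [inner_lt_norm_mul_iff_real, ← hnorm]
      exact fun h ↦ hpq (smul_right_injective E hp.ne' h)
    have := hpos _ hp
    rw [← hnorm, sub_self, zero_mul, zero_add]
    exact mul_pos (by positivity) (sub_pos.2 (hnorm ▸ hinner))
  · have hnonneg : ∀ z : E, 0 ≤ a ‖z‖ := fun z ↦
      ha₀ ▸ hmono.monotoneOn self_mem_Ici (norm_nonneg z) (norm_nonneg z)
    have hstrict : 0 < (a ‖p‖ - a ‖q‖) * (‖p‖ - ‖q‖) := by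
      obtain h | h := hnorm.lt_or_gt
      · exact mul_pos_of_neg_of_neg (sub_neg.2 (hmono (norm_nonneg p) (norm_nonneg q) h))
          (sub_neg.2 h)
      · exact mul_pos (sub_pos.2 (hmono (norm_nonneg q) (norm_nonneg p) h)) (sub_pos.2 h)
    have := hnonneg p
    have := hnonneg q
    exact add_pos_of_pos_of_nonneg hstrict
      (mul_nonneg (by positivity) (sub_nonneg.2 (real_inner_le_norm p q)))

end Flux

section Barrier

lemma exists_continuous_rightInverse {f : ℝ → ℝ} {p q : ℝ} (hpq : p ≤ q)
    (hf : ContinuousOn f (Icc p q)) (hmono : StrictMonoOn f (Icc p q)) :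
    ∃ b : ℝ → ℝ, Continuous b ∧ (∀ s, b s ∈ Icc p q) ∧ ∀ s ∈ Icc (f p) (f q), f (b s) = s := by
  have hfpq : f p ≤ f q := hmono.monotoneOn (left_mem_Icc.2 hpq) (right_mem_Icc.2 hpq) hpq
  have hmaps : MapsTo f (Icc p q) (Icc (f p) (f q)) := hmono.monotoneOn.mapsTo_Icc
  have hsurj : Function.Surjective hmaps.restrict := by
    rintro ⟨s, hs⟩
    obtain ⟨t, ht, rfl⟩ := intermediate_value_Icc hpq hf hs
    exact ⟨⟨t, ht⟩, rfl⟩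
  let e : Icc p q ≃o Icc (f p) (f q) :=
    StrictMono.orderIsoOfSurjective hmaps.restrict (fun s t h ↦ hmono s.2 t.2 h) hsurj
  refine ⟨IccExtend hfpq fun s ↦ e.symm s, ?_, fun s ↦ (e.symm _).2, fun s hs ↦ ?_⟩
  · exact (continuous_subtype_val.comp e.symm.continuous).Icc_extend'
  · rw [IccExtend_of_mem _ _ hs]
    exact congr_arg Subtype.val (e.apply_symm_apply ⟨s, hs⟩)

lemma exists_continuousOn_comp_eq_mul_zpow {a : ℝ → ℝ} {m ρ R : ℝ} (hm : 0 < m)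
    (hac : ContinuousOn a (Icc 0 m)) (hmono : StrictMonoOn a (Icc 0 m)) (ha₀ : a 0 = 0)
    (hρ : 0 < ρ) (k : ℤ) :
    ∃ c > 0, ∃ g : ℝ → ℝ, ContinuousOn g (Ioi 0) ∧ (∀ r, g r ∈ Icc 0 m) ∧
      ∀ r ∈ Icc ρ R, a (g r) = c * r ^ k := by
  obtain ⟨b, hb, hbm, hab⟩ := exists_continuous_rightInverse hm.le hac hmono
  have ham : 0 < a m := ha₀ ▸ hmono (left_mem_Icc.2 hm.le) (right_mem_Icc.2 hm.le) hm
  have hzpow : ContinuousOn (fun r : ℝ ↦ r ^ k) (Ioi 0) := fun r hr ↦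
    (continuousAt_zpow₀ r k (Or.inl (ne_of_gt hr))).continuousWithinAt
  obtain ⟨M, hM⟩ := isCompact_Icc.exists_bound_of_continuousOn
    (hzpow.mono fun r (hr : r ∈ Icc ρ R) ↦ hρ.trans_le hr.1)
  set N := max M 1
  have hN : 0 < N := lt_max_of_lt_right one_pos
  refine ⟨a m / N, div_pos ham hN, fun r ↦ b (a m / N * r ^ k),
    hb.comp_continuousOn (continuousOn_const.mul hzpow), fun r ↦ hbm _, fun r hr ↦ hab _ ?_⟩
  have hr₀ : 0 ≤ r ^ k := zpow_nonneg (hρ.le.trans hr.1) k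
  rw [ha₀]
  refine ⟨by positivity, ?_⟩
  rw [div_mul_eq_mul_div, div_le_iff₀ hN]
  gcongr
  exact (le_abs_self _).trans ((hM r hr).trans (le_max_left M 1))

section Primitive

variable {g : ℝ → ℝ} {R : ℝ}

lemma intervalIntegrable_of_continuousOn_Ioi (hg : ContinuousOn g (Ioi 0)) {r : ℝ} (hr : 0 < r)
    (hR : 0 < R) : IntervalIntegrable g volume r R :=
  (hg.mono fun _ ht ↦ (lt_min hr hR).trans_le ht.1).intervalIntegrable

lemma hasDerivAt_integral_left (hg : ContinuousOn g (Ioi 0)) (hR : 0 < R) {r : ℝ} (hr : 0 < r) :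
    HasDerivAt (fun r ↦ ∫ t in r..R, g t) (-g r) r :=
  intervalIntegral.integral_hasDerivAt_left (intervalIntegrable_of_continuousOn_Ioi hg hr hR)
    (hg.stronglyMeasurableAtFilter isOpen_Ioi r hr) (hg.continuousAt (Ioi_mem_nhds hr))

lemma contDiffOn_integral_left (hg : ContinuousOn g (Ioi 0)) (hR : 0 < R) :
    ContDiffOn ℝ 1 (fun r ↦ ∫ t in r..R, g t) (Ioi 0) := by
  have hderiv := fun r (hr : r ∈ Ioi (0 : ℝ)) ↦ hasDerivAt_integral_left hg hR hr
  rw [contDiffOn_one_iff_derivWithin isOpen_Ioi.uniqueDiffOn]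
  refine ⟨fun r hr ↦ (hderiv r hr).differentiableAt.differentiableWithinAt, ?_⟩
  refine hg.neg.congr fun r hr ↦ ?_
  rw [derivWithin_of_isOpen isOpen_Ioi hr, (hderiv r hr).deriv, Pi.neg_apply]

end Primitive

lemma exists_barrier_profile {a : ℝ → ℝ} (hac : ContinuousOn a (Ici 0))
    (hmono : StrictMonoOn a (Ici 0)) (ha₀ : a 0 = 0) {ρ R κ : ℝ} (hρ : 0 < ρ) (hρR : ρ < R)
    (hκ : 0 < κ) (k : ℤ) :
    ∃ c, ∃ V : ℝ → ℝ, ContDiffOn ℝ 1 V (Ioi 0) ∧ V R = 0 ∧ V ρ ≤ κ ∧ (∀ r ∈ Ioo ρ R, 0 < V r) ∧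
      ∀ r ∈ Ioo ρ R, ∃ s ≥ 0, HasDerivAt V (-s) r ∧ a s = c * r ^ k := by
  have hR : 0 < R := hρ.trans hρR
  have hm : 0 < κ / (R - ρ) := div_pos hκ (sub_pos.2 hρR)
  obtain ⟨c, hc, g, hg, hgm, hag⟩ := exists_continuousOn_comp_eq_mul_zpow (R := R) hm
    (hac.mono Icc_subset_Ici_self) (hmono.mono Icc_subset_Ici_self) ha₀ hρ k
  have hgpos : ∀ r ∈ Ioo ρ R, 0 < g r := by
    refine fun r hr ↦ (hgm r).1.lt_of_ne fun h ↦ ?_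
    have hzero := hag r (Ioo_subset_Icc_self hr)
    rw [← h, ha₀] at hzero
    exact (mul_pos hc (zpow_pos (hρ.trans hr.1) k)).ne hzero
  refine ⟨c, fun r ↦ ∫ t in r..R, g t, contDiffOn_integral_left hg hR,
    intervalIntegral.integral_same, ?_, fun r hr ↦ ?_, fun r hr ↦ ?_⟩
  · calc ∫ t in ρ..R, g t ≤ ∫ _ in ρ..R, κ / (R - ρ) :=
          intervalIntegral.integral_mono hρR.le (intervalIntegrable_of_continuousOn_Ioi hg hρ hR)
            intervalIntegrable_const fun r ↦ (hgm r).2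
      _ = κ := by
        rw [intervalIntegral.integral_const, smul_eq_mul, mul_div_cancel₀ _ (sub_pos.2 hρR).ne']
  · exact intervalIntegral.intervalIntegral_pos_of_pos_on
      (intervalIntegrable_of_continuousOn_Ioi hg (hρ.trans hr.1) hR)
      (fun t ht ↦ hgpos t ⟨hr.1.trans ht.1, ht.2⟩) hr.2
  · exact ⟨g r, (hgm r).1, hasDerivAt_integral_left hg hR (hρ.trans hr.1),
      hag r (Ioo_subset_Icc_self hr)⟩

variable {E : Type*} [NormedAddCommGroup E] [InnerProductSpace ℝ E]

lemma neg_flux_gradient_comp_norm_sub [CompleteSpace E] {a V : ℝ → ℝ} (ha₀ : a 0 = 0) {s : ℝ}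
    (hs : 0 ≤ s) {x y : E} (hxy : x ≠ y) (hV : HasDerivAt V (-s) ‖x - y‖) :
    -flux a (∇ (fun z ↦ V ‖z - y‖) x) = a s • ‖x - y‖⁻¹ • (x - y) := by
  have hunit : ‖-(‖x - y‖⁻¹ • (x - y))‖ = 1 := by
    rw [norm_neg, norm_smul, norm_inv, norm_norm,
      inv_mul_cancel₀ (norm_ne_zero_iff.2 (sub_ne_zero.2 hxy))]
  rw [(hasGradientAt_comp_norm_sub hxy hV).gradient, neg_smul, ← smul_neg,
    flux_smul_of_norm_eq_one ha₀ hs hunit, smul_neg, neg_neg]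

variable [FiniteDimensional ℝ E] [MeasurableSpace E] [BorelSpace E]

theorem exists_radial_barrier {a : ℝ → ℝ} (hac : ContinuousOn a (Ici 0))
    (hmono : StrictMonoOn a (Ici 0)) (ha₀ : a 0 = 0) {ρ R κ : ℝ} (hρ : 0 < ρ) (hρR : ρ < R)
    (hκ : 0 < κ) (y : E) :
    ∃ v : E → ℝ, ContDiffOn ℝ 1 v {y}ᶜ ∧ (∀ x ∈ sphere y R, v x = 0) ∧
      (∀ x ∈ sphere y ρ, v x ≤ κ) ∧ (∀ x ∈ ball y R \ closedBall y ρ, 0 < v x) ∧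
      WeakDivNonpos (fun x ↦ -flux a (∇ v x)) (ball y R \ closedBall y ρ) := by
  obtain ⟨c, V, hV, hVR, hVρ, hVpos, hVderiv⟩ :=
    exists_barrier_profile hac hmono ha₀ hρ hρR hκ (1 - (finrank ℝ E : ℤ))
  have hnorm : ∀ x ∈ ball y R \ closedBall y ρ, ‖x - y‖ ∈ Ioo ρ R := fun x hx ↦
    ⟨not_le.1 (mem_closedBall_iff_norm.not.1 hx.2), mem_ball_iff_norm.1 hx.1⟩
  have hne : ball y R \ closedBall y ρ ⊆ {y}ᶜ := fun x hx hxy ↦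
    hx.2 (hxy ▸ mem_closedBall_self hρ.le)
  refine ⟨fun x ↦ V ‖x - y‖, contDiffOn_comp_norm_sub hV y, fun x hx ↦ ?_, fun x hx ↦ ?_,
    fun x hx ↦ hVpos _ (hnorm x hx), ?_⟩
  · exact (congr_arg V (mem_sphere_iff_norm.1 hx)).trans hVR
  · exact (congr_arg V (mem_sphere_iff_norm.1 hx)).trans_le hVρ
  · refine (weakDivNonpos_const_smul_norm_zpow_smul c hne).congr
      (isOpen_ball.sdiff isClosed_closedBall) fun x hx ↦ ?_
    obtain ⟨s, hs, hderiv, has⟩ := hVderiv _ (hnorm x hx)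
    have hr : ‖x - y‖ ≠ 0 := (hρ.trans (hnorm x hx).1).ne'
    rw [neg_flux_gradient_comp_norm_sub ha₀ hs (hne hx) hderiv, has, mul_smul,
      smul_smul (_ ^ _), ← zpow_sub_one₀ hr, sub_sub_cancel_left]

end Barrier

section StrongMaximumPrinciple

lemma frontier_ball_diff_closedBall_subset {X : Type*} [PseudoMetricSpace X] (y : X) (ρ R : ℝ) :
    frontier (ball y R \ closedBall y ρ) ⊆ sphere y R ∪ sphere y ρ := by
  rw [sdiff_eq]
  refine (frontier_inter_subset _ _).trans (union_subset_union ?_ ?_)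
  · exact inter_subset_left.trans frontier_ball_subset_sphere
  · rw [frontier_compl]
    exact inter_subset_right.trans frontier_closedBall_subset_sphere

lemma closure_ball_diff_closedBall_subset {X : Type*} [PseudoMetricSpace X] (y : X) (ρ R : ℝ) :
    closure (ball y R \ closedBall y ρ) ⊆ closedBall y R \ ball y ρ :=
  closure_minimal (sdiff_subset_sdiff ball_subset_closedBall ball_subset_closedBall)
    (isClosed_closedBall.sdiff isOpen_ball)

variable {E : Type*} [NormedAddCommGroup E] [InnerProductSpace ℝ E] [FiniteDimensional ℝ E]
  [MeasurableSpace E] [BorelSpace E] {a : ℝ → ℝ} {U : Set E} {u : E → ℝ}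

lemma pos_of_mem_ball_of_pos (hac : ContinuousOn a (Ici 0)) (hmono : StrictMonoOn a (Ici 0))
    (ha₀ : a 0 = 0) (hU : IsOpen U) (hu : ContDiffOn ℝ 1 u U) (hupos : ∀ x ∈ U, 0 ≤ u x)
    (hsuper : WeakDivNonpos (fun x ↦ flux a (∇ u x)) U) {x y : E} {R : ℝ}
    (hRU : closedBall y R ⊆ U) (hy : 0 < u y) (hx : x ∈ ball y R) : 0 < u x := by
  obtain rfl | hxy := eq_or_ne x y
  · exact hy
  have : Nontrivial E := ⟨x, y, hxy⟩
  have hyU : y ∈ U := hRU (mem_closedBall_self (dist_nonneg.trans_lt hx).le)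
  obtain ⟨δ, hδ, hδu⟩ := Metric.eventually_nhds_iff.1
    ((hu.continuousOn.continuousAt (hU.mem_nhds hyU)).eventually_const_le (half_lt_self hy))
  obtain ⟨ρ, hρ, hρmin⟩ := exists_between (lt_min hδ (dist_pos.2 hxy))
  obtain ⟨hρδ, hρx⟩ := lt_min_iff.1 hρmin
  obtain ⟨v, hv, hvR, hvρ, hvpos, hvsub⟩ :=
    exists_radial_barrier hac hmono ha₀ hρ (hρx.trans hx) (half_pos hy) y
  set Ω := ball y R \ closedBall y ρ
  have hclosure : closure Ω ⊆ closedBall y R \ ball y ρ :=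
    closure_ball_diff_closedBall_subset y ρ R
  have hΩU : closure Ω ⊆ U := (hclosure.trans sdiff_subset).trans hRU
  have hΩy : closure Ω ⊆ {y}ᶜ := fun z hz hzy ↦ (hclosure hz).2 (hzy ▸ mem_ball_self hρ)
  have hxΩ : x ∈ Ω := ⟨hx, not_le.2 hρx⟩
  have hfr : ∀ z ∈ frontier Ω, v z ≤ u z := by
    intro z hz
    obtain hzR | hzρ := frontier_ball_diff_closedBall_subset y ρ R hz
    · exact (hvR z hzR).trans_le (hupos z (hRU (sphere_subset_closedBall hzR)))
    · exact (hvρ z hzρ).trans (hδu ((mem_sphere.1 hzρ).trans_lt hρδ))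
  exact (hvpos x hxΩ).trans_le <| le_of_weakDivNonpos_of_le_on_frontier (continuous_flux hac ha₀)
    (fun p q ↦ inner_flux_sub_flux_pos hmono ha₀) (isOpen_ball.sdiff isClosed_closedBall)
    (isBounded_ball.subset sdiff_subset) (hu.mono (subset_closure.trans hΩU))
    (hv.mono (subset_closure.trans hΩy)) (hu.continuousOn.mono hΩU) (hv.continuousOn.mono hΩy)
    (hsuper.mono (subset_closure.trans hΩU)) hvsub hfr hxΩ

theorem stmt_10_general (hac : ContinuousOn a (Ici 0)) (hmono : StrictMonoOn a (Ici 0))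
    (ha₀ : a 0 = 0) (hUo : IsOpen U) (hUc : IsPreconnected U) (hu : ContDiffOn ℝ 1 u U)
    (hupos : ∀ x ∈ U, 0 ≤ u x) (hsuper : WeakDivNonpos (fun x ↦ flux a (∇ u x)) U) :
    (∀ x ∈ U, u x = 0) ∨ (∀ x ∈ U, 0 < u x) := by
  by_cases! hzero : ∀ x ∈ U, u x = 0
  · exact Or.inl hzero
  obtain ⟨x₀, hx₀U, hx₀⟩ := hzero
  set P := U ∩ u ⁻¹' Ioi 0
  have hP : IsOpen P := hu.continuousOn.isOpen_inter_preimage hUo isOpen_Ioi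
  have hP_nonempty : (U ∩ P).Nonempty :=
    ⟨x₀, hx₀U, hx₀U, (hupos x₀ hx₀U).lt_of_ne' hx₀⟩
  suffices hclosed : closure P ∩ U ⊆ P from
    Or.inr fun x hx ↦ (hUc.subset_of_closure_inter_subset hP hP_nonempty hclosed hx).2
  rintro x ⟨hxP, hxU⟩
  obtain ⟨R, hR, hRU⟩ := Metric.isOpen_iff.1 hUo x hxU
  obtain ⟨y, hyP, hxy⟩ := Metric.mem_closure_iff.1 hxP (R / 2 / 2) (by positivity)
  refine ⟨hxU, pos_of_mem_ball_of_pos hac hmono ha₀ hUo hu hupos hsuper (R := R / 2)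
    (fun z hz ↦ hRU ?_) hyP.2 (mem_ball.2 (by linarith))⟩
  rw [mem_ball]
  linarith [dist_triangle z y x, mem_closedBall.1 hz, dist_comm x y]

end StrongMaximumPrinciple

/-- Strong maximum principle for the A-Laplacian: if `u ∈ C¹(U)`, `u ≥ 0` in the open
connected set `U ⊂ ℝ²`, and `Δ_A u ≤ 0` weakly in `U` (i.e.
`∫_U (a(|∇u|)/|∇u|) ∇u · ∇ζ ≥ 0` for all nonnegative `ζ ∈ C_c^∞(U)`),
then `u ≡ 0` in `U` or `u > 0` everywhere in `U`. -/
theorem stmt_10 (a a' : ℝ → ℝ) (a₀ a₁ : ℝ)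
    (ha₀ : 0 < a₀) (ha₀₁ : a₀ ≤ a₁)
    (hnonneg : ∀ t, 0 ≤ t → 0 ≤ a t) (ha00 : a 0 = 0)
    (hderiv : ∀ t, 0 ≤ t → HasDerivWithinAt a (a' t) (Set.Ici 0) t)
    (hcont : ContinuousOn a' (Set.Ici 0))
    (hlow : ∀ t, 0 < t → a₀ ≤ t * a' t / a t)
    (hhigh : ∀ t, 0 < t → t * a' t / a t ≤ a₁)
    (U : Set (EuclideanSpace ℝ (Fin 2))) (hUo : IsOpen U) (hUc : IsConnected U)
    (u : EuclideanSpace ℝ (Fin 2) → ℝ) (hu : ContDiffOn ℝ 1 u U)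
    (hupos : ∀ x ∈ U, 0 ≤ u x)
    (hsuper : ∀ ζ : EuclideanSpace ℝ (Fin 2) → ℝ, ContDiff ℝ (⊤ : ℕ∞) ζ →
      HasCompactSupport ζ → tsupport ζ ⊆ U → (∀ x, 0 ≤ ζ x) →
      0 ≤ ∫ x in U,
        ⟪(a ‖gradient u x‖ / ‖gradient u x‖) • gradient u x, gradient ζ x⟫) :
    (∀ x ∈ U, u x = 0) ∨ (∀ x ∈ U, 0 < u x) := by
  have hderivAt : ∀ t, 0 < t → HasDerivAt a (a' t) t := fun t ht ↦
    (hderiv t ht.le).hasDerivAt (Ici_mem_nhds ht)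
  have hcont_a : ContinuousOn a (Ici 0) := fun t ht ↦ (hderiv t ht).continuousWithinAt
  have hmono : StrictMonoOn a (Ici 0) := strictMonoOn_Ici_of_mul_deriv_div_pos hcont_a hderivAt
    (fun t ht ↦ hnonneg t ht.le) fun t ht ↦ ha₀.trans_le (hlow t ht)
  exact stmt_10_general hcont_a hmono ha00 hUo hUc.isPreconnected hu hupos hsuper
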